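/- Let k be a perfect field and let X and Y be reduced normal schemes of finite type over k. Then the product X ×_k Y is normal. -/

import Mathlib

/-!
Statement 2.  Let `k` be a perfect field and `X`, `Y` reduced normal schemes of
finite type over `k`.  Then `X ×_k Y` is normal.

Normality of a scheme is expressed by saying that all stalks are
integrally closed domains.
-/

open AlgebraicGeometry CategoryTheory CategoryTheory.Limits

/-- A scheme is normal if all of its local rings are integrally closed domains. -/
def IsNormalScheme (X : Scheme) : Prop :=
  ∀ x : X, IsDomain (X.presheaf.stalk x) ∧ IsIntegrallyClosed (X.presheaf.stalk x)

open scoped TensorProduct nonZeroDivisors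

universe u v

/-!
Let `A` and `B` be integrally closed domains essentially of finite type over `k`, with fraction
fields `K` and `L`. As `k` is perfect, `K` is étale over a purely transcendental extension
`E = k(s)`, which is a localization of the smooth `k`-algebra `k[s]`. Smooth maps and localizations
preserve integral closures, hence so does base change along `K`, and likewise along `L`: both
`K ⊗ B` and `A ⊗ L` are integrally closed in `K ⊗ L`, and by flatness they intersect in `A ⊗ B`.
Moreover `K ⊗ L` is étale over the normal domain `E ⊗ L` and therefore integrally closed in the
reduced Artinian ring `K ⊗_E Frac (E ⊗ L)`. After localizing `A ⊗ B` at a prime this Artinian ring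
has no nontrivial idempotents, since these would descend to a local ring; so it is a field, and
the local ring is an integrally closed domain.
-/

lemma exists_algebraicIndependent_etale_adjoin (k K : Type*) [Field k] [PerfectField k] [Field K]
    [Algebra k K] [Algebra.EssFiniteType k K] :
    ∃ s : Finset K, AlgebraicIndependent k ((↑) : s → K) ∧
      Algebra.Etale (IntermediateField.adjoin k (s : Set K)) K := by
  obtain ⟨s, hs, hsep⟩ := exists_isTranscendenceBasis_and_isSeparable_of_perfectField k K
  let E := IntermediateField.adjoin k (s : Set K)
  have : Algebra.EssFiniteType E K := .of_comp k E K
  have : Algebra.FormallyEtale E K := .of_isSeparable E K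
  have : Module.Finite E K := Algebra.FormallyUnramified.finite_of_free E K
  exact ⟨s, hs.1, ⟨inferInstance, Algebra.FinitePresentation.of_finiteType.mp inferInstance⟩⟩

/-- The ring-homomorphism version of `IsIntegrallyClosedIn`: `f` identifies its source with the
integral closure of the source in the target. It is used for maps of tensor products, which carry
no canonical algebra structure. -/
structure IsIntegrallyClosedHom {R S : Type*} [CommRing R] [CommRing S] (f : R →+* S) : Prop where
  injective : Function.Injective f
  mem_range_of_isIntegralElem : ∀ s, f.IsIntegralElem s → s ∈ f.range

namespace IsIntegrallyClosedHom

variable {R S T : Type*} [CommRing R] [CommRing S] [CommRing T]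

lemma algebraMap_iff [Algebra R S] :
    IsIntegrallyClosedHom (algebraMap R S) ↔ IsIntegrallyClosedIn R S :=
  ⟨fun h ↦ isIntegrallyClosedIn_iff.mpr ⟨h.1, fun {x} hx ↦ h.2 x hx⟩,
    fun h ↦ ⟨(isIntegrallyClosedIn_iff.mp h).1, fun _ hx ↦ (isIntegrallyClosedIn_iff.mp h).2 hx⟩⟩

lemma of_bijective {f : R →+* S} (hf : Function.Bijective f) : IsIntegrallyClosedHom f :=
  ⟨hf.injective, fun s _ ↦ hf.surjective s⟩

lemma comp {g : S →+* T} {f : R →+* S} (hg : IsIntegrallyClosedHom g)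
    (hf : IsIntegrallyClosedHom f) : IsIntegrallyClosedHom (g.comp f) := by
  refine ⟨hg.injective.comp hf.injective, fun t ht ↦ ?_⟩
  obtain ⟨s, rfl⟩ := hg.mem_range_of_isIntegralElem t ht.of_comp
  obtain ⟨r, rfl⟩ := hf.mem_range_of_isIntegralElem s (ht.of_map hg.injective)
  exact ⟨r, rfl⟩

lemma of_algEquiv {k A B A' B' : Type*} [CommRing k] [CommRing A] [CommRing B] [CommRing A']
    [CommRing B'] [Algebra k A] [Algebra k B] [Algebra k A'] [Algebra k B'] {f : A →ₐ[k] B}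
    {g : A' →ₐ[k] B'} (hf : IsIntegrallyClosedHom f.toRingHom) (e₁ : A ≃ₐ[k] A') (e₂ : B ≃ₐ[k] B')
    (h : g.comp e₁.toAlgHom = e₂.toAlgHom.comp f) : IsIntegrallyClosedHom g.toRingHom := by
  have hg : g = e₂.toAlgHom.comp (f.comp e₁.symm.toAlgHom) := by
    ext x
    simpa using DFunLike.congr_fun h (e₁.symm x)
  rw [hg]
  exact (of_bijective e₂.bijective).comp (hf.comp (of_bijective e₁.symm.bijective))

lemma algebraMap_tensorProduct_of_bijective_toIntegralClosure [Algebra R S] [Algebra R T]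
    (hb : Function.Bijective (TensorProduct.toIntegralClosure R S T))
    (hT : IsIntegrallyClosedHom (algebraMap R T)) :
    IsIntegrallyClosedHom (algebraMap S (S ⊗[R] T)) := by
  have := algebraMap_iff.mp hT
  let e : S ≃ₐ[S] S ⊗[R] integralClosure R T :=
    (Algebra.TensorProduct.rid R S S).symm.trans
      (Algebra.TensorProduct.congr .refl (IsIntegralClosure.equiv R R T (integralClosure R T)))
  let φ : S →ₐ[S] integralClosure S (S ⊗[R] T) :=
    (TensorProduct.toIntegralClosure R S T).comp e.toAlgHom
  have hφ : algebraMap S (S ⊗[R] T) = (algebraMap _ _).comp φ.toRingHom :=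
    ((Subalgebra.val _).comp φ).comp_algebraMap.symm
  rw [hφ]
  exact (algebraMap_iff.mpr inferInstance).comp (of_bijective (hb.comp e.bijective))

section BaseChange

variable {k A C : Type*} (K : Type*) [CommRing k] [CommRing K] [Algebra k K] [CommRing A]
  [Algebra k A] [CommRing C] [Algebra k C]

lemma tensorProduct_map_id_comm {f : A →ₐ[k] C}
    (hf : IsIntegrallyClosedHom (Algebra.TensorProduct.map (AlgHom.id K K) f).toRingHom) :
    IsIntegrallyClosedHom (Algebra.TensorProduct.map f (AlgHom.id k K)).toRingHom := by
  refine of_algEquiv (f := Algebra.TensorProduct.map (AlgHom.id k K) f) hf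
    (Algebra.TensorProduct.comm k K A) (Algebra.TensorProduct.comm k K C) ?_
  ext <;> simp

lemma baseChange_of_bijective_toIntegralClosure [Algebra A C] [IsScalarTower k A C]
    (hC : IsIntegrallyClosedHom (algebraMap A C))
    (hb : Function.Bijective (TensorProduct.toIntegralClosure A (A ⊗[k] K) C)) :
    IsIntegrallyClosedHom
      (Algebra.TensorProduct.map (AlgHom.id K K) (IsScalarTower.toAlgHom k A C)).toRingHom := by
  let e := ((Algebra.TensorProduct.comm A (A ⊗[k] K) C).restrictScalars k).trans <|
    ((Algebra.TensorProduct.cancelBaseChange k A A C K).restrictScalars k).trans <|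
      Algebra.TensorProduct.comm k C K
  refine of_algEquiv (f := IsScalarTower.toAlgHom k (A ⊗[k] K) ((A ⊗[k] K) ⊗[A] C))
    (g := Algebra.TensorProduct.map (AlgHom.id k K) (IsScalarTower.toAlgHom k A C))
    (algebraMap_tensorProduct_of_bijective_toIntegralClosure hb hC)
    (Algebra.TensorProduct.comm k A K) e ?_
  ext <;> simp [e, Algebra.smul_def]

lemma baseChange_of_smooth [Algebra.Smooth k K] {f : A →ₐ[k] C}
    (hf : IsIntegrallyClosedHom f.toRingHom) :
    IsIntegrallyClosedHom (Algebra.TensorProduct.map (AlgHom.id K K) f).toRingHom := by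
  let _ : Algebra A C := f.toRingHom.toAlgebra
  have := IsScalarTower.of_algebraMap_eq' f.comp_algebraMap.symm
  exact baseChange_of_bijective_toIntegralClosure K hf
    TensorProduct.toIntegralClosure_bijective_of_smooth

lemma baseChange_of_isLocalization (M : Submonoid k) [IsLocalization M K] {f : A →ₐ[k] C}
    (hf : IsIntegrallyClosedHom f.toRingHom) :
    IsIntegrallyClosedHom (Algebra.TensorProduct.map (AlgHom.id K K) f).toRingHom := by
  let _ : Algebra A C := f.toRingHom.toAlgebra
  have := IsScalarTower.of_algebraMap_eq' f.comp_algebraMap.symm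
  exact baseChange_of_bijective_toIntegralClosure K hf <|
    TensorProduct.toIntegralClosure_bijective_of_isLocalization (Algebra.algebraMapSubmonoid A M)

lemma baseChange_trans (E : Type*) [CommRing E] [Algebra k E] [Algebra E K] [IsScalarTower k E K]
    {f : A →ₐ[k] C} (hf : IsIntegrallyClosedHom (Algebra.TensorProduct.map (AlgHom.id K K)
      (Algebra.TensorProduct.map (AlgHom.id E E) f)).toRingHom) :
    IsIntegrallyClosedHom (Algebra.TensorProduct.map (AlgHom.id K K) f).toRingHom := by
  refine hf.of_algEquiv (Algebra.TensorProduct.cancelBaseChange k E K K A)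
    (Algebra.TensorProduct.cancelBaseChange k E K K C) ?_
  ext
  simp

lemma baseChange_of_smooth_of_isLocalization_of_smooth (P E : Type*) [CommRing P] [CommRing E]
    [Algebra k P] [Algebra k E] [Algebra P E] [Algebra E K] [IsScalarTower k P E]
    [IsScalarTower k E K] [Algebra.Smooth k P]
    (M : Submonoid P) [IsLocalization M E] [Algebra.Smooth E K] {f : A →ₐ[k] C}
    (hf : IsIntegrallyClosedHom f.toRingHom) :
    IsIntegrallyClosedHom (Algebra.TensorProduct.map (AlgHom.id K K) f).toRingHom := by
  have hP := baseChange_of_smooth P hf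
  have hE := baseChange_trans E P (baseChange_of_isLocalization E M hP)
  exact baseChange_trans K E (baseChange_of_smooth K hE)

open scoped IntermediateField.algebraAdjoinAdjoin in
lemma baseChange_of_essFiniteType {k K : Type*} [Field k] [PerfectField k] [Field K]
    [Algebra k K] [Algebra.EssFiniteType k K] [Algebra k A] [Algebra k C] {f : A →ₐ[k] C}
    (hf : IsIntegrallyClosedHom f.toRingHom) :
    IsIntegrallyClosedHom (Algebra.TensorProduct.map (AlgHom.id K K) f).toRingHom := by
  obtain ⟨s, hs, _⟩ := exists_algebraicIndependent_etale_adjoin k K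
  have : Algebra.Smooth k (MvPolynomial s k) := ⟨inferInstance, inferInstance⟩
  let P := Algebra.adjoin k (s : Set K)
  have hP : Algebra.adjoin k (Set.range ((↑) : s → K)) = P := by simp [P]
  have : Algebra.Smooth k P := .of_equiv (hs.aevalEquiv.trans (Subalgebra.equivOfEq _ _ hP))
  exact baseChange_of_smooth_of_isLocalization_of_smooth K P
    (IntermediateField.adjoin k (s : Set K)) P⁰ hf

end BaseChange

end IsIntegrallyClosedHom

section Intersection

variable {k A K B L : Type*} [CommRing k]

lemma exists_tensorProduct_map_eq_rTensor [AddCommGroup A] [Module k A]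
    [AddCommGroup K] [Module k K] [AddCommGroup B] [Module k B] [AddCommGroup L] [Module k L]
    {i : A →ₗ[k] K} {j : B →ₗ[k] L} [Module.Flat k (K ⧸ i.range)] (hj : Function.Injective j)
    {y : A ⊗[k] L} {z : K ⊗[k] B} (h : i.rTensor L y = j.lTensor K z) :
    ∃ w : A ⊗[k] B, TensorProduct.map i j w = i.rTensor L y := by
  let π := i.range.mkQ
  have hπ : Function.Exact i π := LinearMap.exact_iff.mpr (Submodule.ker_mkQ _)
  have hz : π.rTensor B z = 0 := by
    apply Module.Flat.lTensor_preserves_injective_linearMap (M := K ⧸ i.range) j hj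
    calc j.lTensor _ (π.rTensor B z) = π.rTensor L (j.lTensor K z) := by
          simp only [← LinearMap.comp_apply, LinearMap.lTensor_comp_rTensor,
            LinearMap.rTensor_comp_lTensor]
      _ = π.rTensor L (i.rTensor L y) := by rw [h]
      _ = 0 := (rTensor_exact L hπ (Submodule.mkQ_surjective _)).apply_apply_eq_zero y
      _ = j.lTensor _ 0 := (map_zero _).symm
  obtain ⟨w, rfl⟩ := (rTensor_exact B hπ (Submodule.mkQ_surjective _) z).mp hz
  exact ⟨w, by rw [h, ← LinearMap.comp_apply, LinearMap.lTensor_comp_rTensor]⟩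

lemma IsIntegrallyClosedHom.tensorProduct_map [CommRing A] [Algebra k A] [CommRing K] [Algebra k K]
    [CommRing B] [Algebra k B] [CommRing L] [Algebra k L] {i : A →ₐ[k] K} {j : B →ₐ[k] L}
    [Module.Flat k A] [Module.Flat k (K ⧸ i.toLinearMap.range)] (hj₀ : Function.Injective j)
    (hi : IsIntegrallyClosedHom (Algebra.TensorProduct.map i (AlgHom.id k L)).toRingHom)
    (hj : IsIntegrallyClosedHom (Algebra.TensorProduct.map (AlgHom.id K K) j).toRingHom) :
    IsIntegrallyClosedHom (Algebra.TensorProduct.map i j).toRingHom := by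
  let f := Algebra.TensorProduct.map i j
  have hA : f = (Algebra.TensorProduct.map i (.id k L)).comp
      (Algebra.TensorProduct.map (.id k A) j) := by ext <;> simp [f]
  have hB : f = (Algebra.TensorProduct.map (.id k K) j).comp
      (Algebra.TensorProduct.map i (.id k B)) := by ext <;> simp [f]
  refine ⟨?_, fun q hq ↦ ?_⟩
  · change Function.Injective f
    rw [hA]
    exact hi.injective.comp (Module.Flat.lTensor_preserves_injective_linearMap j.toLinearMap hj₀)
  · change f.toRingHom.IsIntegralElem q at hq
    obtain ⟨y, rfl⟩ := hi.mem_range_of_isIntegralElem q <| by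
      rw [hA] at hq
      exact hq.of_comp
    obtain ⟨z, hz⟩ := hj.mem_range_of_isIntegralElem _ <| by
      rw [hB] at hq
      exact hq.of_comp
    exact exists_tensorProduct_map_eq_rTensor (i := i.toLinearMap) (j := j.toLinearMap) hj₀ hz.symm

end Intersection

attribute [local instance] Algebra.TensorProduct.rightAlgebra in
lemma isDomain_and_isIntegrallyClosed_tensorProduct_of_isFractionRing {k P E L : Type*} [Field k]
    [CommRing P] [IsDomain P] [Algebra k P] [CommRing E] [Algebra k E] [Algebra P E]
    [IsScalarTower k P E] [IsFractionRing P E] [CommRing L] [Algebra k L] [IsDomain (P ⊗[k] L)]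
    [IsIntegrallyClosed (P ⊗[k] L)] :
    IsDomain (E ⊗[k] L) ∧ IsIntegrallyClosed (E ⊗[k] L) := by
  have : Nontrivial L :=
    (Algebra.TensorProduct.includeRight : L →ₐ[k] P ⊗[k] L).toRingHom.domain_nontrivial
  have hle := algebraMapSubmonoid_le_nonZeroDivisors_of_faithfulSMul (P ⊗[k] L) (le_refl P⁰)
  let e : E ⊗[P] (P ⊗[k] L) ≃+* E ⊗[k] L :=
    (Algebra.TensorProduct.cancelBaseChange k P P E L).toRingEquiv
  have := IsLocalization.isDomain_of_le_nonZeroDivisors (E ⊗[P] (P ⊗[k] L)) hle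
  have := isIntegrallyClosed_of_isLocalization (E ⊗[P] (P ⊗[k] L)) _ hle
  exact ⟨e.symm.toMulEquiv.isDomain _, .of_equiv e⟩

open scoped IntermediateField.algebraAdjoinAdjoin in
lemma isDomain_and_isIntegrallyClosed_adjoin_tensorProduct {k K : Type*} (L : Type*)
    [Field k] [Field K] [Algebra k K] [Field L] [Algebra k L] {s : Set K}
    (hs : AlgebraicIndependent k ((↑) : s → K)) :
    IsDomain (IntermediateField.adjoin k s ⊗[k] L) ∧
      IsIntegrallyClosed (IntermediateField.adjoin k s ⊗[k] L) := by
  let P := Algebra.adjoin k s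
  have hP : Algebra.adjoin k (Set.range ((↑) : s → K)) = P := by simp [P]
  let e : P ⊗[k] L ≃+* MvPolynomial s L :=
    ((Algebra.TensorProduct.comm k P L).trans <|
      (Algebra.TensorProduct.congr .refl
        (hs.aevalEquiv.trans (Subalgebra.equivOfEq _ _ hP)).symm).trans
      ((MvPolynomial.algebraTensorAlgEquiv k L).restrictScalars k)).toRingEquiv
  have : IsDomain (P ⊗[k] L) := e.toMulEquiv.isDomain _
  have : IsIntegrallyClosed (P ⊗[k] L) := .of_equiv e.symm
  exact isDomain_and_isIntegrallyClosed_tensorProduct_of_isFractionRing (P := P)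

lemma isArtinianRing_isReduced_tensorProduct_of_etale (E K F : Type*) [Field E] [Field K]
    [Field F] [Algebra E K] [Algebra E F] [Algebra.Etale E K] :
    IsArtinianRing (K ⊗[E] F) ∧ _root_.IsReduced (K ⊗[E] F) := by
  let e := Algebra.TensorProduct.comm E F K
  have : Module.Finite E K := Algebra.FormallyUnramified.finite_of_free E K
  have : IsArtinianRing (F ⊗[E] K) := .of_finite F _
  have : _root_.IsReduced (F ⊗[E] K) := Algebra.FormallyUnramified.isReduced_of_field F _
  exact ⟨e.toRingEquiv.isArtinianRing, isReduced_of_injective e.symm e.symm.injective⟩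

lemma exists_isIntegrallyClosedHom_tensorProduct_of_etale (k : Type*) (E K : Type u) (L : Type v)
    [CommRing k] [Field E] [Algebra k E] [Field K] [Algebra k K] [Algebra E K] [IsScalarTower k E K]
    [Algebra.Etale E K] [CommRing L] [Algebra k L] [IsDomain (E ⊗[k] L)]
    [IsIntegrallyClosed (E ⊗[k] L)] :
    ∃ (Q : Type (max u v)) (_ : CommRing Q) (f : K ⊗[k] L →+* Q),
      IsArtinianRing Q ∧ _root_.IsReduced Q ∧ IsIntegrallyClosedHom f := by
  let F := FractionRing (E ⊗[k] L)
  have hF : IsIntegrallyClosedHom (IsScalarTower.toAlgHom E (E ⊗[k] L) F).toRingHom :=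
    IsIntegrallyClosedHom.algebraMap_iff.mpr inferInstance
  let e : K ⊗[k] L ≃+* K ⊗[E] (E ⊗[k] L) :=
    (Algebra.TensorProduct.cancelBaseChange k E E K L).symm.toRingEquiv
  obtain ⟨h₁, h₂⟩ := isArtinianRing_isReduced_tensorProduct_of_etale E K F
  exact ⟨K ⊗[E] F, inferInstance, _, h₁, h₂, (IsIntegrallyClosedHom.baseChange_of_smooth K hF).comp
    (.of_bijective (f := e.toRingHom) e.bijective)⟩

lemma exists_isIntegrallyClosedHom_tensorProduct (k : Type*) (K : Type u) (L : Type v)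
    [Field k] [PerfectField k] [Field K] [Algebra k K] [Algebra.EssFiniteType k K]
    [Field L] [Algebra k L] :
    ∃ (Q : Type (max u v)) (_ : CommRing Q) (f : K ⊗[k] L →+* Q),
      IsArtinianRing Q ∧ _root_.IsReduced Q ∧ IsIntegrallyClosedHom f := by
  obtain ⟨s, hs, _⟩ := exists_algebraicIndependent_etale_adjoin k K
  obtain ⟨_, _⟩ := isDomain_and_isIntegrallyClosed_adjoin_tensorProduct L hs
  exact exists_isIntegrallyClosedHom_tensorProduct_of_etale k
    (IntermediateField.adjoin k (s : Set K)) K L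

lemma isField_of_forall_isIdempotentElem {Q : Type*} [CommRing Q] [Nontrivial Q] [IsArtinianRing Q]
    [_root_.IsReduced Q] (h : ∀ e : Q, IsIdempotentElem e → e = 0 ∨ e = 1) : IsField Q := by
  refine PrimeSpectrum.subsingleton_iff_isField_of_isReduced.mp ⟨fun x y ↦ ?_⟩
  obtain ⟨e, he, hxe⟩ :=
    PrimeSpectrum.exists_idempotent_basicOpen_eq_of_isClopen (isClopen_discrete {x})
  rcases h e he with rfl | rfl
  · simp at hxe
  · have hy : y ∈ ({x} : Set (PrimeSpectrum Q)) := by simp [hxe]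
    exact (Set.mem_singleton_iff.mp hy).symm

lemma IsIntegrallyClosedHom.exists_isIdempotentElem {R Q : Type*} [CommRing R] [CommRing Q]
    {f : R →+* Q} (hf : IsIntegrallyClosedHom f) {e : Q} (he : IsIdempotentElem e) :
    ∃ r, IsIdempotentElem r ∧ f r = e := by
  have hmonic : (.X ^ 2 - .X : Polynomial R).Monic :=
    Polynomial.monic_X_pow_sub (Polynomial.degree_X_le.trans_lt (by norm_num))
  have hint : f.IsIntegralElem e := ⟨.X ^ 2 - .X, hmonic, by simp [pow_two, he.eq]⟩
  obtain ⟨r, rfl⟩ := hf.mem_range_of_isIntegralElem e hint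
  exact ⟨r, hf.injective (by rw [map_mul, he.eq]), rfl⟩

lemma IsIntegrallyClosedHom.isDomain_and_isIntegrallyClosed_of_isLocalRing {R Q : Type*}
    [CommRing R] [IsLocalRing R] [CommRing Q] [IsArtinianRing Q] [_root_.IsReduced Q]
    {f : R →+* Q} (hf : IsIntegrallyClosedHom f) : IsDomain R ∧ IsIntegrallyClosed R := by
  have : Nontrivial Q := hf.injective.nontrivial
  have hQ : IsField Q := isField_of_forall_isIdempotentElem fun e he ↦ by
    obtain ⟨r, hr, rfl⟩ := hf.exists_isIdempotentElem he
    rcases IsLocalRing.isUnit_or_isUnit_one_sub_self r with h | h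
    · exact .inr (by rw [(IsIdempotentElem.iff_eq_one_of_isUnit h).mp hr, map_one])
    · exact .inl (by rw [h.mul_left_eq_zero.mp hr.mul_one_sub_self, map_zero])
  let _ : Field Q := hQ.toField
  let _ : Algebra R Q := f.toAlgebra
  have : IsIntegrallyClosedIn R Q := IsIntegrallyClosedHom.algebraMap_iff.mp hf
  have : FaithfulSMul R Q := (faithfulSMul_iff_algebraMap_injective R Q).mpr hf.injective
  exact ⟨hf.injective.isDomain f, .of_isIntegrallyClosedIn R Q⟩

/-- A commutative ring is normal if all of its local rings are integrally closed domains; the ring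
itself need not be a domain. -/
def IsNormalRing (R : Type*) [CommRing R] : Prop :=
  ∀ (p : Ideal R) [p.IsPrime],
    IsDomain (Localization.AtPrime p) ∧ IsIntegrallyClosed (Localization.AtPrime p)

lemma isDomain_and_isIntegrallyClosed_of_ringEquiv {R S : Type*} [CommRing R] [CommRing S]
    (e : R ≃+* S) (h : IsDomain R ∧ IsIntegrallyClosed R) : IsDomain S ∧ IsIntegrallyClosed S := by
  obtain ⟨_, _⟩ := h
  exact ⟨e.symm.toMulEquiv.isDomain R, .of_equiv e⟩

attribute [local instance] Algebra.TensorProduct.rightAlgebra in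
lemma IsIntegrallyClosedHom.isNormalRing {R Q : Type*} [CommRing R] [CommRing Q]
    [IsArtinianRing Q] [_root_.IsReduced Q] {f : R →+* Q} (hf : IsIntegrallyClosedHom f) :
    IsNormalRing R := by
  intro p _
  let _ : Algebra R Q := f.toAlgebra
  let Rp := Localization.AtPrime p
  let M := Algebra.algebraMapSubmonoid Q p.primeCompl
  have : IsLocalization M (Rp ⊗[R] Q) := IsLocalization.tensorRight Rp p.primeCompl
  have : IsArtinianRing (Rp ⊗[R] Q) := IsArtinianRing.localization_artinian M _
  have : _root_.IsReduced (Rp ⊗[R] Q) :=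
    let e := IsLocalization.algEquiv M (Rp ⊗[R] Q) (Localization M)
    isReduced_of_injective e e.injective
  exact IsIntegrallyClosedHom.isDomain_and_isIntegrallyClosed_of_isLocalRing <|
    algebraMap_tensorProduct_of_bijective_toIntegralClosure
      (TensorProduct.toIntegralClosure_bijective_of_isLocalization p.primeCompl) hf

namespace IsNormalRing

variable {R S : Type*} [CommRing R] [CommRing S]

lemma isDomain_and_isIntegrallyClosed_localization_atPrime (M : Submonoid R) [Algebra R S]
    [IsLocalization M S] (hS : IsNormalRing S) (p : Ideal R) [hp : p.IsPrime]
    (hM : Disjoint (M : Set R) p) :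
    IsDomain (Localization.AtPrime p) ∧ IsIntegrallyClosed (Localization.AtPrime p) := by
  let P := p.map (algebraMap R S)
  have : P.IsPrime := IsLocalization.isPrime_of_isPrime_disjoint M S p hp hM
  have := IsLocalization.isLocalization_isLocalization_atPrime_isLocalization M
    (Localization.AtPrime P) P
  simp only [P, IsLocalization.under_map_of_isPrime_disjoint M S hp hM] at this
  exact isDomain_and_isIntegrallyClosed_of_ringEquiv
    (IsLocalization.algEquiv p.primeCompl (Localization.AtPrime P) _).toRingEquiv (hS P)

lemma of_ringEquiv (e : R ≃+* S) (hR : IsNormalRing R) : IsNormalRing S := by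
  intro p _
  let _ : Algebra S R := e.symm.toRingHom.toAlgebra
  let e' : S ≃ₐ[S] R := .ofRingEquiv (f := e.symm) fun _ ↦ rfl
  have : IsLocalization (⊥ : Submonoid S) S := .of_le_isUnit bot_le
  have : IsLocalization (⊥ : Submonoid S) R := IsLocalization.isLocalization_of_algEquiv ⊥ e'
  exact hR.isDomain_and_isIntegrallyClosed_localization_atPrime ⊥ p
    (by simpa using p.one_notMem)

attribute [local instance] Algebra.TensorProduct.rightAlgebra in
lemma of_forall_localization_tensorProduct {A T : Type*} [CommRing A] [CommRing T] [Algebra A T]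
    (h : ∀ (p : Ideal A) [p.IsPrime], IsNormalRing (Localization.AtPrime p ⊗[A] T)) :
    IsNormalRing T := by
  intro p _
  let q := p.comap (algebraMap A T)
  have := IsLocalization.tensorRight (S := T) (Localization.AtPrime q) q.primeCompl
  refine (h q).isDomain_and_isIntegrallyClosed_localization_atPrime
    (Algebra.algebraMapSubmonoid T q.primeCompl) p ?_
  rw [Set.disjoint_left]
  rintro _ ⟨a, ha, rfl⟩ hp
  exact ha hp

end IsNormalRing

section Tensor

variable (k A B : Type*) [Field k] [PerfectField k] [CommRing A] [Algebra k A]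
  [Algebra.EssFiniteType k A] [CommRing B] [Algebra k B] [Algebra.EssFiniteType k B]

lemma isNormalRing_tensorProduct_of_isIntegrallyClosed [IsDomain A] [IsIntegrallyClosed A]
    [IsDomain B] [IsIntegrallyClosed B] : IsNormalRing (A ⊗[k] B) := by
  let K := FractionRing A
  let L := FractionRing B
  have : Algebra.EssFiniteType A K := .of_isLocalization _ A⁰
  have : Algebra.EssFiniteType B L := .of_isLocalization _ B⁰
  have : Algebra.EssFiniteType k K := .comp k A K
  have : Algebra.EssFiniteType k L := .comp k B L
  have hA : IsIntegrallyClosedHom (IsScalarTower.toAlgHom k A K).toRingHom :=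
    IsIntegrallyClosedHom.algebraMap_iff.mpr inferInstance
  have hB : IsIntegrallyClosedHom (IsScalarTower.toAlgHom k B L).toRingHom :=
    IsIntegrallyClosedHom.algebraMap_iff.mpr inferInstance
  obtain ⟨Q, _, f, _, _, hf⟩ := exists_isIntegrallyClosedHom_tensorProduct k K L
  have hAL := (hA.baseChange_of_essFiniteType (K := L)).tensorProduct_map_id_comm
  have hBK := hB.baseChange_of_essFiniteType (K := K)
  exact (hf.comp (IsIntegrallyClosedHom.tensorProduct_map hB.injective hAL hBK)).isNormalRing

variable {A B}

lemma IsNormalRing.tensorProduct_of_isIntegrallyClosed [IsDomain A] [IsIntegrallyClosed A]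
    (hB : IsNormalRing B) : IsNormalRing (A ⊗[k] B) := by
  refine .of_ringEquiv (Algebra.TensorProduct.comm k B A).toRingEquiv <|
    .of_forall_localization_tensorProduct (A := B) fun q _ ↦ ?_
  obtain ⟨_, _⟩ := hB q
  have : Algebra.EssFiniteType B (Localization.AtPrime q) := .of_isLocalization _ q.primeCompl
  have : Algebra.EssFiniteType k (Localization.AtPrime q) := .comp k B _
  exact (isNormalRing_tensorProduct_of_isIntegrallyClosed k (Localization.AtPrime q) A).of_ringEquiv
    (Algebra.TensorProduct.cancelBaseChange k B B (Localization.AtPrime q) A).symm.toRingEquiv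

lemma IsNormalRing.tensorProduct (hA : IsNormalRing A) (hB : IsNormalRing B) :
    IsNormalRing (A ⊗[k] B) := by
  refine .of_forall_localization_tensorProduct (A := A) fun p _ ↦ ?_
  obtain ⟨_, _⟩ := hA p
  have : Algebra.EssFiniteType A (Localization.AtPrime p) := .of_isLocalization _ p.primeCompl
  have : Algebra.EssFiniteType k (Localization.AtPrime p) := .comp k A _
  exact (IsNormalRing.tensorProduct_of_isIntegrallyClosed k hB).of_ringEquiv
    (Algebra.TensorProduct.cancelBaseChange k A A (Localization.AtPrime p) B).symm.toRingEquiv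

end Tensor

lemma isNormalScheme_Spec_iff {R : CommRingCat.{u}} : IsNormalScheme (Spec R) ↔ IsNormalRing R := by
  have e (p : PrimeSpectrum R) := (Spec.stalkIso R p).commRingCatIsoToRingEquiv
  refine ⟨fun h p hp ↦ ?_, fun h p ↦ ?_⟩
  · exact isDomain_and_isIntegrallyClosed_of_ringEquiv (e ⟨p, hp⟩) (h ⟨p, hp⟩)
  · have := PrimeSpectrum.isPrime p
    exact isDomain_and_isIntegrallyClosed_of_ringEquiv (e p).symm (h (PrimeSpectrum.asIdeal p))

namespace IsNormalScheme

lemma of_isOpenImmersion {U X : Scheme.{u}} (f : U ⟶ X) [IsOpenImmersion f]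
    (hX : IsNormalScheme X) : IsNormalScheme U :=
  fun x ↦ isDomain_and_isIntegrallyClosed_of_ringEquiv
    (asIso (f.stalkMap x)).commRingCatIsoToRingEquiv (hX (f x))

lemma of_openCover {X : Scheme.{u}} (𝒰 : X.OpenCover) (h : ∀ i, IsNormalScheme (𝒰.X i)) :
    IsNormalScheme X := by
  intro x
  obtain ⟨i, y, rfl⟩ := 𝒰.exists_eq x
  exact isDomain_and_isIntegrallyClosed_of_ringEquiv
    (asIso ((𝒰.f i).stalkMap y)).commRingCatIsoToRingEquiv.symm (h i y)

lemma pullback_Spec {k : Type u} [Field k] [PerfectField k] {R S : CommRingCat.{u}}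
    (f : Spec R ⟶ Spec (.of k)) (g : Spec S ⟶ Spec (.of k))
    [hf : LocallyOfFiniteType f] [hg : LocallyOfFiniteType g]
    (hR : IsNormalScheme (Spec R)) (hS : IsNormalScheme (Spec S)) :
    IsNormalScheme (pullback f g) := by
  obtain ⟨φ, rfl⟩ := Spec.map_surjective f
  obtain ⟨ψ, rfl⟩ := Spec.map_surjective g
  rw [HasRingHomProperty.Spec_iff (P := @LocallyOfFiniteType)] at hf hg
  let _ : Algebra k R := φ.hom.toAlgebra
  let _ : Algebra k S := ψ.hom.toAlgebra
  have : Algebra.FiniteType k R := hf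
  have : Algebra.FiniteType k S := hg
  have hRS : IsNormalRing (R ⊗[k] S) :=
    .tensorProduct k (isNormalScheme_Spec_iff.mp hR) (isNormalScheme_Spec_iff.mp hS)
  exact (isNormalScheme_Spec_iff (R := .of (R ⊗[k] S)).mpr hRS).of_isOpenImmersion
    (pullbackSpecIso k R S).hom

end IsNormalScheme

theorem stmt2_general {k : Type u} [Field k] [PerfectField k] (X Y : Scheme.{u})
    (fX : X ⟶ Spec (.of k)) (fY : Y ⟶ Spec (.of k))
    [LocallyOfFiniteType fX] [LocallyOfFiniteType fY]
    (hX : IsNormalScheme X) (hY : IsNormalScheme Y) : IsNormalScheme (pullback fX fY) := by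
  let 𝒰 := X.affineOpenCover
  let 𝒱 := Y.affineOpenCover
  refine .of_openCover (Scheme.Pullback.openCoverOfLeftRight 𝒰.openCover 𝒱.openCover fX fY) ?_
  rintro ⟨i, j⟩
  have : IsOpenImmersion (𝒰.f i) := 𝒰.map_prop i
  have : IsOpenImmersion (𝒱.f j) := 𝒱.map_prop j
  exact .pullback_Spec (𝒰.f i ≫ fX) (𝒱.f j ≫ fY) (hX.of_isOpenImmersion (𝒰.f i))
    (hY.of_isOpenImmersion (𝒱.f j))

theorem stmt2 {k : Type} [Field k] [PerfectField k]
    (X Y : Scheme)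
    (fX : X ⟶ Spec (CommRingCat.of k)) (fY : Y ⟶ Spec (CommRingCat.of k))
    -- `X` and `Y` are of finite type over `k`
    [LocallyOfFiniteType fX] [LocallyOfFiniteType fY]
    [CompactSpace X] [CompactSpace Y]
    -- `X` and `Y` are reduced and normal
    [IsReduced X] [IsReduced Y]
    (hX : IsNormalScheme X) (hY : IsNormalScheme Y) :
    IsNormalScheme (pullback fX fY) :=
  stmt2_general X Y fX fY hX hY
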